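/- arXiv:math/0612705 — 2 statements merged into one kernel-verified Lean document; each statement's English description precedes it below -/
import Mathlib

section
/- Let n ≥ 2 and let F_n be the free group on free generators x_1, …, x_n. Consider the following 2n−3 automorphisms of F_n: η₁, which sends x₂ to x₂x₁ and fixes every other generator; and, for each k with 3 ≤ k ≤ n, the right transvection ρ_k, which sends x_k to x_k·x₁ and fixes every other generator, and the left transvection λ_k, which sends x_k to x₁⁻¹·x_k and fixes every other generator. Then these 2n−3 automorphisms pairwise commute, and the group homomorphism from ℤ^{2n−3} to Aut(F_n) sending the standard basis vectors to η₁ and to the ρ_k and λ_k (3 ≤ k ≤ n) is injective; in other words, they are a basis of a free abelian subgroup of Aut(F_n) of rank 2n−3. -/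
/-!
Write `t = x₁`. Each of the given automorphisms is a *twist*: for integer vectors `a`, `b` vanishing
at the index of `t`, it sends `x_i` to `t ^ (-a i) * x_i * t ^ (b i)`; here `a` and `b` are
indicator functions. Twists fix `t`, so composing them adds the exponent vectors
(`IsTwist.mul`), and a twist is determined by its exponents (`IsTwist.ext`); hence they commute.

The product `∏ g_j ^ c_j` is therefore the twist whose exponents are the corresponding linear
combinations. In a free group `t ^ (-a) * x * t ^ b` determines `a` and `b`
(`eq_and_eq_of_twist_eq`): this is detected by the representation on `ℤ ⊕ ℤ` in which `t` translates
the first copy of `ℤ` and `x` swaps the two copies. So the exponents are determined by the product,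
and since exactly one `g_j` contributes to each exponent (left or right, at a given index), each
`c_j` can be read off.
-/

/-- The automorphism `φ` sends each free generator `x_i` to `t ^ (-a i) * x_i * t ^ (b i)`, where
`t` is the generator with index `z`; the exponents at `z` itself are normalized to be zero. -/
structure IsTwist {ι : Type*} (z : ι) (φ : MulAut (FreeGroup ι)) (a b : ι → ℤ) : Prop where
  left_zero : a z = 0
  right_zero : b z = 0
  apply_of : ∀ i, φ (FreeGroup.of i) =
    FreeGroup.of z ^ (-a i) * FreeGroup.of i * FreeGroup.of z ^ b i

namespace IsTwist

variable {ι : Type*} {z : ι} {φ ψ : MulAut (FreeGroup ι)} {a b a' b' : ι → ℤ}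

theorem apply_base (h : IsTwist z φ a b) : φ (FreeGroup.of z) = FreeGroup.of z := by
  rw [h.apply_of, h.left_zero, h.right_zero]
  simp

theorem ext (h : IsTwist z φ a b) (h' : IsTwist z ψ a b) : φ = ψ := by
  have : φ.toMonoidHom = ψ.toMonoidHom := by
    ext i
    exact (h.apply_of i).trans (h'.apply_of i).symm
  exact MulEquiv.toMonoidHom_injective this

theorem one : IsTwist z (1 : MulAut (FreeGroup ι)) 0 0 :=
  ⟨rfl, rfl, fun i => by simp⟩

theorem mul (h : IsTwist z φ a b) (h' : IsTwist z ψ a' b') :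
    IsTwist z (φ * ψ) (a + a') (b + b') := by
  refine ⟨by simp [h.left_zero, h'.left_zero], by simp [h.right_zero, h'.right_zero], fun i => ?_⟩
  rw [MulAut.mul_apply, h'.apply_of, map_mul, map_mul, map_zpow, map_zpow, h.apply_base,
    h.apply_of, Pi.add_apply, Pi.add_apply, neg_add_rev, zpow_add, zpow_add]
  simp only [mul_assoc]

theorem inv (h : IsTwist z φ a b) : IsTwist z φ⁻¹ (-a) (-b) := by
  refine ⟨by simp [h.left_zero], by simp [h.right_zero], fun i => ?_⟩
  apply φ.injective
  rw [MulAut.apply_inv_self, map_mul, map_mul, map_zpow, map_zpow, h.apply_base, h.apply_of]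
  simp [mul_assoc]

theorem pow (h : IsTwist z φ a b) (k : ℕ) : IsTwist z (φ ^ k) (k • a) (k • b) := by
  induction k with
  | zero => simpa using one
  | succ k ih => simpa only [pow_succ, succ_nsmul] using ih.mul h

theorem zpow (h : IsTwist z φ a b) (k : ℤ) : IsTwist z (φ ^ k) (k • a) (k • b) := by
  obtain ⟨m, rfl | rfl⟩ := k.eq_nat_or_neg
  · simpa only [zpow_natCast, natCast_zsmul] using h.pow m
  · simpa only [zpow_neg, zpow_natCast, neg_smul, natCast_zsmul] using (h.pow m).inv

theorem list_prod {N : ℕ} {φ : Fin N → MulAut (FreeGroup ι)} {a b : Fin N → ι → ℤ}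
    (h : ∀ j, IsTwist z (φ j) (a j) (b j)) :
    IsTwist z (List.ofFn φ).prod (∑ j, a j) (∑ j, b j) := by
  induction N with
  | zero => simpa using one
  | succ N ih =>
    rw [List.ofFn_succ, List.prod_cons, Fin.sum_univ_succ, Fin.sum_univ_succ]
    exact (h 0).mul (ih fun j => h j.succ)

theorem commute (h : IsTwist z φ a b) (h' : IsTwist z ψ a' b') : Commute φ ψ := by
  have := h'.mul h
  rw [add_comm a' a, add_comm b' b] at this
  exact (h.mul h').ext this

end IsTwist

/-- A word `t ^ (-a) * x * t ^ b` in two distinct free generators determines its exponents. -/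
theorem eq_and_eq_of_twist_eq {ι : Type*} {z i : ι} (hi : i ≠ z) {a b a' b' : ℤ}
    (h : FreeGroup.of z ^ (-a) * FreeGroup.of i * FreeGroup.of z ^ b =
      FreeGroup.of z ^ (-a') * FreeGroup.of i * FreeGroup.of z ^ b') : a = a' ∧ b = b' := by
  classical
  let f : FreeGroup ι →* Equiv.Perm (ℤ ⊕ ℤ) := FreeGroup.lift fun j =>
    if j = z then Equiv.Perm.sumCongrHom ℤ ℤ (Equiv.addRight 1, 1) else Equiv.sumComm ℤ ℤ
  have hz (k : ℤ) : f (FreeGroup.of z) ^ k =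
      Equiv.Perm.sumCongrHom ℤ ℤ (Equiv.addRight k, 1) := by
    have h0 : f (FreeGroup.of z) = Equiv.Perm.sumCongrHom ℤ ℤ (Equiv.addRight 1, 1) := by
      simp [f]
    rw [h0, ← map_zpow, Prod.pow_mk, one_zpow, Equiv.zsmul_addRight, zsmul_one, Int.cast_id]
  have hx : f (FreeGroup.of i) = Equiv.sumComm ℤ ℤ := by simp [f, hi]
  have key := congrArg f h
  simp only [map_mul, map_zpow, hz, hx] at key
  -- The image of `inr 0` records the left exponent, that of `inl 0` the right one.
  have h1 := congrArg (fun e : Equiv.Perm (ℤ ⊕ ℤ) => e (Sum.inr 0)) key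
  have h2 := congrArg (fun e : Equiv.Perm (ℤ ⊕ ℤ) => e (Sum.inl 0)) key
  simp [Equiv.Perm.mul_apply] at h1 h2
  exact ⟨h1, h2⟩

/-- The exponent vector of `g j` on the left (`s = True`) or on the right (`s = False`).
The automorphism `g j` moves only the generator with index `(j + 1) / 2 + 1`, and multiplies it on
the left precisely when `j` is even and nonzero. -/
def twistExponent (n : ℕ) (s : Prop) [Decidable s] (j : ℕ) (i : Fin n) : ℤ :=
  if (i : ℕ) = (j + 1) / 2 + 1 ∧ ((j % 2 = 0 ∧ j ≠ 0) ↔ s) then 1 else 0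

/-- At the generator moved by `g j`, on the side where `g j` acts, no other `g k` contributes. -/
theorem sum_twistExponent (n : ℕ) (s : Prop) [Decidable s] (c : Fin (2 * n - 3) → ℤ)
    (j : Fin (2 * n - 3)) (hs : ((j : ℕ) % 2 = 0 ∧ (j : ℕ) ≠ 0) ↔ s) (i : Fin n)
    (hi : (i : ℕ) = (j + 1) / 2 + 1) :
    (∑ k, c k • twistExponent n s k) i = c j := by
  rw [Finset.sum_apply, Finset.sum_eq_single j]
  · simp only [Pi.smul_apply, twistExponent, smul_eq_mul]
    rw [if_pos ⟨hi, hs⟩, mul_one]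
  · intro k _ hk
    simp only [Pi.smul_apply, twistExponent, smul_eq_mul]
    rw [if_neg, mul_zero]
    rintro ⟨h1, h2⟩
    have h3 := h2.trans hs.symm
    apply hk
    ext
    omega
  · simp

/-- The `2n-3` automorphisms `η₁` (sending `x₂ ↦ x₂x₁`), `ρ_k : x_k ↦ x_k x₁` and
`λ_k : x_k ↦ x₁⁻¹ x_k` (for `3 ≤ k ≤ n`) of the free group `F_n` pairwise commute, and the
homomorphism `ℤ^{2n-3} → Aut(F_n)` sending the standard basis vectors to them is injective;
i.e. they are a basis of a free abelian subgroup of `Aut(F_n)` of rank `2n-3`.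
Here `g 0 = η₁`, `g (2m+1) = ρ_{m+3}` and `g (2m+2) = λ_{m+3}` for `0 ≤ m < n-2`,
and the generators are indexed by `Fin n` (so `x_k` is `FreeGroup.of ⟨k-1, _⟩`). -/
theorem typeE_basis_aut_free_abelian (n : ℕ) (hn : 2 ≤ n)
    (g : Fin (2 * n - 3) → MulAut (FreeGroup (Fin n)))
    (hη : g ⟨0, by omega⟩ (FreeGroup.of ⟨1, by omega⟩) =
      FreeGroup.of ⟨1, by omega⟩ * FreeGroup.of ⟨0, by omega⟩)
    (hη' : ∀ i : Fin n, i ≠ ⟨1, by omega⟩ → g ⟨0, by omega⟩ (FreeGroup.of i) = FreeGroup.of i)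
    (hρ : ∀ m : ℕ, ∀ _ : m < n - 2,
      g ⟨2 * m + 1, by omega⟩ (FreeGroup.of ⟨m + 2, by omega⟩) =
        FreeGroup.of ⟨m + 2, by omega⟩ * FreeGroup.of ⟨0, by omega⟩)
    (hρ' : ∀ m : ℕ, ∀ _ : m < n - 2, ∀ i : Fin n, i ≠ ⟨m + 2, by omega⟩ →
      g ⟨2 * m + 1, by omega⟩ (FreeGroup.of i) = FreeGroup.of i)
    (hlam : ∀ m : ℕ, ∀ _ : m < n - 2,
      g ⟨2 * m + 2, by omega⟩ (FreeGroup.of ⟨m + 2, by omega⟩) =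
        (FreeGroup.of ⟨0, by omega⟩)⁻¹ * FreeGroup.of ⟨m + 2, by omega⟩)
    (hlam' : ∀ m : ℕ, ∀ _ : m < n - 2, ∀ i : Fin n, i ≠ ⟨m + 2, by omega⟩ →
      g ⟨2 * m + 2, by omega⟩ (FreeGroup.of i) = FreeGroup.of i) :
    (∀ j k, Commute (g j) (g k)) ∧
      Function.Injective (fun c : Fin (2 * n - 3) → ℤ => (List.ofFn fun j => g j ^ c j).prod) := by
  have key (j : Fin (2 * n - 3)) : IsTwist (⟨0, by omega⟩ : Fin n) (g j)
      (twistExponent n True j) (twistExponent n False j) := by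
    refine ⟨by simp [twistExponent], by simp [twistExponent], fun i => ?_⟩
    obtain ⟨j, hj⟩ := j
    obtain rfl | ⟨m, rfl | rfl⟩ : j = 0 ∨ ∃ m, j = 2 * m + 1 ∨ j = 2 * m + 2 := by
      rcases Nat.eq_zero_or_pos j with h | h
      · exact Or.inl h
      · exact Or.inr ⟨(j - 1) / 2, by omega⟩
    · by_cases hi : i = ⟨1, by omega⟩
      · subst hi
        rw [hη]
        simp [twistExponent]
      · rw [hη' i hi]
        have : (i : ℕ) ≠ 1 := fun h => hi (Fin.ext h)
        simp [twistExponent, this]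
    · by_cases hi : i = ⟨m + 2, by omega⟩
      · subst hi
        rw [hρ m (by omega)]
        have h1 : m + 2 = (2 * m + 1 + 1) / 2 + 1 := by omega
        simp [twistExponent, ← h1]
      · rw [hρ' m (by omega) i hi]
        have h1 : (i : ℕ) ≠ (2 * m + 1 + 1) / 2 + 1 := fun h => hi (Fin.ext (by simp; omega))
        simp only [twistExponent, h1, false_and, if_false]
        simp
    · by_cases hi : i = ⟨m + 2, by omega⟩
      · subst hi
        rw [hlam m (by omega)]
        have h1 : m + 2 = (2 * m + 2 + 1) / 2 + 1 := by omega
        simp [twistExponent, ← h1]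
      · rw [hlam' m (by omega) i hi]
        have h1 : (i : ℕ) ≠ (2 * m + 2 + 1) / 2 + 1 := fun h => hi (Fin.ext (by simp; omega))
        simp only [twistExponent, h1, false_and, if_false]
        simp
  refine ⟨fun j k => (key j).commute (key k), fun c d hcd => ?_⟩
  have hc := IsTwist.list_prod fun j => (key j).zpow (c j)
  have hd := IsTwist.list_prod fun j => (key j).zpow (d j)
  dsimp only at hcd
  rw [← hcd] at hd
  funext j
  have hlt : ((j : ℕ) + 1) / 2 + 1 < n := by omega
  obtain ⟨hl, hr⟩ := eq_and_eq_of_twist_eq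
    (show (⟨(j + 1) / 2 + 1, hlt⟩ : Fin n) ≠ ⟨0, by omega⟩ by simp)
    ((hc.apply_of _).symm.trans (hd.apply_of _))
  by_cases hs : (j : ℕ) % 2 = 0 ∧ (j : ℕ) ≠ 0
  · rwa [sum_twistExponent n True c j (iff_true_intro hs) _ rfl,
      sum_twistExponent n True d j (iff_true_intro hs) _ rfl] at hl
  · rwa [sum_twistExponent n False c j (iff_false_intro hs) _ rfl,
      sum_twistExponent n False d j (iff_false_intro hs) _ rfl] at hr
end

section
/- Let n ≥ 3, let F_n be the free group on free generators x_1, …, x_n, and let w be a nontrivial element of the subgroup of F_n generated by x₁ and x₂ whose image in the abelianization of F_n is trivial. For each k with 3 ≤ k ≤ n let R_k be the automorphism sending x_k to x_k·w and fixing every other generator, and let L_k be the automorphism sending x_k to w⁻¹·x_k and fixing every other generator. Then the outer automorphism classes of the R_k and L_k all lie in IA_n, and the group homomorphism from ℤ^{2n−4} to Out(F_n) sending the standard basis vectors to these classes is injective; in particular these classes are a basis of a free abelian subgroup of IA_n of rank 2n−4 (the type C subgroup associated to w and the basis x_1, …, x_n, with these classes as its standard generators). -/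
/-!
Let `T(a, b)` denote an automorphism that fixes `w` and sends each generator `x_i` to
`w^{-b_i} x_i w^{a_i}`.  Such automorphisms compose by adding the exponent vectors, and an
automorphism is determined by its values on generators, so they all commute.  The `g j` are of this
form, hence so is every product of powers of them (`typeCGraph`); the exponents of the product
`∏ g j ^ c j` at `x_{m+3}` are `a = c (2m)` and `b = c (2m+1)`, and they vanish at `x_1, x_2`.
Since `w` dies in the abelianization, all of them act trivially there.

For injectivity, suppose two products `T(a, b)` and `T(a', b')` differ by conjugation by `u`.
Both fix `x_1` and `x_2`, so `u` commutes with `x_1` and `x_2`, and `u = 1` by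
`FreeGroup.eq_one_of_commute_of`.  Hence `w^{-b_i} x_i w^{a_i} = w^{-b'_i} x_i w^{a'_i}` for every
`i`.  For `i ≥ 3` this equation survives any substitution for `x_i`, because `w` does not involve
`x_i`.  Substituting `1` gives `b'_i - b_i = a'_i - a_i =: e`; substituting `x_1` and `x_2` shows
that `w^e` commutes with both, so `w^e = 1`, and `e = 0` because free groups are torsion-free.
-/


/-- The subgroup of inner automorphisms (the range of the conjugation homomorphism
`G → Aut(G)`) is normal, so that `Out(G) = Aut(G) ⧸ Inn(G)` is a group. -/
instance mulAutConjRangeNormal (G : Type*) [Group G] :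
    (MulAut.conj : G →* MulAut G).range.Normal := by
  constructor
  intro a ha φ
  obtain ⟨x, rfl⟩ := ha
  refine ⟨φ x, ?_⟩
  ext y
  simp [MulAut.conj_apply, MulAut.mul_apply, mul_assoc]

theorem List.forall_mem_eq_of_cons_eq_concat {α : Type*} (c : α) (L : List α)
    (h : c :: L = L ++ [c]) : ∀ x ∈ L, x = c := by
  induction L with
  | nil => simp
  | cons y L ih =>
    simp only [List.cons_append, List.cons.injEq] at h
    obtain ⟨rfl, h⟩ := h
    simpa using ih h

/-- If the reduced word of `u` does not end in a power of `x_c`, then `u x_c` is reduced, so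
`u x_c = x_c u` forces every letter of `u` to be `x_c`, which is absurd unless `u = 1`.  With two
generators at hand, at least one of them is not the last letter of `u`. -/
theorem FreeGroup.eq_one_of_commute_of {α : Type*} {a b : α} (hab : a ≠ b) {u : FreeGroup α}
    (ha : Commute u (of a)) (hb : Commute u (of b)) : u = 1 := by
  classical
  rcases List.eq_nil_or_concat u.toWord with h | ⟨M, ⟨p, e⟩, h⟩
  · exact toWord_eq_nil_iff.1 h
  exfalso
  obtain ⟨c, hcp, hc⟩ : ∃ c, p ≠ c ∧ Commute u (of c) := by
    by_cases hpa : p = a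
    · exact ⟨b, hpa ▸ hab, hb⟩
    · exact ⟨a, hpa, ha⟩
  have hred : IsReduced (u.toWord ++ [(c, true)]) := by
    have h1 : IsReduced u.toWord := isReduced_toWord
    rw [h, List.concat_eq_append] at h1 ⊢
    refine h1.append_overlap ?_ (by simp)
    simp [hcp]
  have hmul : (of c * u).toWord = u.toWord ++ [(c, true)] := by
    rw [← hc.eq, toWord_mul, toWord_of, hred.reduce_eq]
  -- A reduction of `c :: u` of full length is `c :: u` itself.
  have hsub := toWord_mul_sublist (of c) u
  rw [hmul, toWord_of] at hsub
  have heq := hsub.eq_of_length (by simp)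
  have := List.forall_mem_eq_of_cons_eq_concat (c, true) u.toWord heq.symm (p, e) (by simp [h])
  exact hcp (congrArg Prod.fst this)

/-- The automorphisms `φ` fixing `w` with `φ x_i = w^{-b_i} x_i w^{a_i}` for all `i`, recorded
together with exponent vectors `(a, b)`; the exponents are kept as data since they are not
visibly determined by `φ`. -/
def typeCGraph {n : ℕ} (w : FreeGroup (Fin n)) :
    Subgroup (MulAut (FreeGroup (Fin n)) × Multiplicative ((Fin n → ℤ) × (Fin n → ℤ))) where
  carrier := {t | t.1 w = w ∧ ∀ i, t.1 (FreeGroup.of i) =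
    w ^ (-(t.2.toAdd.2 i)) * FreeGroup.of i * w ^ (t.2.toAdd.1 i)}
  one_mem' := by simp
  mul_mem' := by
    rintro s t ⟨hs, hs'⟩ ⟨ht, ht'⟩
    refine ⟨by simp [hs, ht], fun i => ?_⟩
    simp only [Prod.fst_mul, MulAut.mul_apply, ht', map_mul, map_zpow, hs, hs', Prod.snd_mul,
      toAdd_mul, Prod.snd_add, Prod.fst_add, Pi.add_apply]
    group
  inv_mem' := by
    rintro s ⟨hs, hs'⟩
    have hsi : s.1⁻¹ w = w := by rw [MulAut.inv_apply, MulEquiv.symm_apply_eq, hs]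
    refine ⟨hsi, fun i => ?_⟩
    rw [Prod.fst_inv, MulAut.inv_apply, MulEquiv.symm_apply_eq]
    simp only [Prod.snd_inv, toAdd_inv, Prod.snd_neg, Prod.fst_neg, Pi.neg_apply, map_mul,
      map_zpow, hs, hs']
    group

theorem FreeGroup.mulAut_ext {α : Type*} {φ ψ : MulAut (FreeGroup α)}
    (h : ∀ i, φ (of i) = ψ (of i)) : φ = ψ := by
  have : φ.toMonoidHom = ψ.toMonoidHom := FreeGroup.ext_hom _ _ h
  ext x
  exact DFunLike.congr_fun this x

theorem typeCGraph_commute {n : ℕ} {w : FreeGroup (Fin n)}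
    {s t : MulAut (FreeGroup (Fin n)) × Multiplicative ((Fin n → ℤ) × (Fin n → ℤ))}
    (hs : s ∈ typeCGraph w) (ht : t ∈ typeCGraph w) : Commute s.1 t.1 := by
  have h1 := (mul_mem hs ht).2
  have h2 := (mul_mem ht hs).2
  refine FreeGroup.mulAut_ext fun i => ?_
  have hsnd : (t * s).2 = (s * t).2 := mul_comm t.2 s.2
  exact (h1 i).trans (hsnd ▸ h2 i).symm

theorem typeCGraph_abelianization {n : ℕ} {w : FreeGroup (Fin n)}
    (hwab : Abelianization.of w = 1)
    {s : MulAut (FreeGroup (Fin n)) × Multiplicative ((Fin n → ℤ) × (Fin n → ℤ))}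
    (hs : s ∈ typeCGraph w) (x : FreeGroup (Fin n)) :
    Abelianization.of (s.1 x) = Abelianization.of x := by
  have : (Abelianization.of).comp s.1.toMonoidHom = Abelianization.of :=
    FreeGroup.ext_hom _ _ fun i => by
      have := hs.2 i
      simp [this, hwab]
  exact DFunLike.congr_fun this x

/-- Killing `x_i`, and replacing it by `x_p` and by `x_q`, determines the exponents of
`w^{-b} x_i w^a` for a nontrivial `w` that does not involve `x_i`. -/
theorem exponents_eq {n : ℕ} {w : FreeGroup (Fin n)} (hw1 : w ≠ 1) {p q i : Fin n}
    (hpq : p ≠ q) (hip : i ≠ p) (hiq : i ≠ q)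
    (hw : w ∈ Subgroup.closure ({FreeGroup.of p, FreeGroup.of q} : Set (FreeGroup (Fin n))))
    {a b a' b' : ℤ}
    (h : w ^ (-b) * FreeGroup.of i * w ^ a = w ^ (-b') * FreeGroup.of i * w ^ a') :
    a = a' ∧ b = b' := by
  have key : ∀ y : FreeGroup (Fin n), w ^ (-b) * y * w ^ a = w ^ (-b') * y * w ^ a' := by
    intro y
    let f : FreeGroup (Fin n) →* FreeGroup (Fin n) :=
      FreeGroup.lift (Function.update FreeGroup.of i y)
    have hf : Set.EqOn f (MonoidHom.id _)
        (Subgroup.closure ({FreeGroup.of p, FreeGroup.of q} : Set (FreeGroup (Fin n)))) := by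
      apply MonoidHom.eqOn_closure
      rintro _ (rfl | rfl)
      · simp [f, hip.symm]
      · simp [f, hiq.symm]
    have hfw : f w = w := hf hw
    simpa [hfw, f] using congrArg f h
  have hinj : Function.Injective (fun k : ℤ => w ^ k) :=
    injective_zpow_iff_not_isOfFinOrder.2 (not_isOfFinOrder_of_isMulTorsionFree hw1)
  have h1 : -b + a = -b' + a' := by
    apply hinj
    simpa [zpow_add] using key 1
  have hcomm : ∀ y : FreeGroup (Fin n), Commute (w ^ (a' - a)) y := by
    intro y
    have hy := key y
    have hb : b' - b = a' - a := by omega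
    have : w ^ (b' - b) * y = y * w ^ (a' - a) := by
      calc w ^ (b' - b) * y = w ^ b' * (w ^ (-b) * y * w ^ a) * w ^ (-a) := by group
        _ = y * w ^ (a' - a) := by rw [hy]; group
    rwa [hb] at this
  have h0 : a' - a = 0 := by
    apply hinj
    simpa using FreeGroup.eq_one_of_commute_of hpq (hcomm _) (hcomm _)
  omega

/-- Let `n ≥ 3` and let `w ≠ 1` lie in the subgroup of `F_n` generated by `x₁, x₂`, with
trivial image in the abelianization of `F_n`.  The outer automorphism classes of the `2n-4`
automorphisms `R_k : x_k ↦ x_k w` and `L_k : x_k ↦ w⁻¹ x_k` (for `3 ≤ k ≤ n`) all lie in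
`IA_n` (i.e. every representative automorphism induces the identity on the abelianization),
they pairwise commute, and the homomorphism `ℤ^{2n-4} → Out(F_n)` sending the standard
basis vectors to these classes is injective; i.e. they are a basis of a free abelian
subgroup of `IA_n` of rank `2n-4` (the type C subgroup associated to `w` and the basis
`x_1, …, x_n`).  Here `g (2m) = R_{m+3}` and `g (2m+1) = L_{m+3}` for `0 ≤ m < n-2`. -/
theorem typeC_subgroup_IA_free_abelian (n : ℕ) (hn : 3 ≤ n)
    (w : FreeGroup (Fin n)) (hw1 : w ≠ 1)
    (hw : w ∈ Subgroup.closure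
      ({FreeGroup.of ⟨0, by omega⟩, FreeGroup.of ⟨1, by omega⟩} : Set (FreeGroup (Fin n))))
    (hwab : Abelianization.of w = 1)
    (g : Fin (2 * n - 4) → MulAut (FreeGroup (Fin n)))
    (hR : ∀ m : ℕ, ∀ _ : m < n - 2,
      g ⟨2 * m, by omega⟩ (FreeGroup.of ⟨m + 2, by omega⟩) =
        FreeGroup.of ⟨m + 2, by omega⟩ * w)
    (hR' : ∀ m : ℕ, ∀ _ : m < n - 2, ∀ i : Fin n, i ≠ ⟨m + 2, by omega⟩ →
      g ⟨2 * m, by omega⟩ (FreeGroup.of i) = FreeGroup.of i)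
    (hL : ∀ m : ℕ, ∀ _ : m < n - 2,
      g ⟨2 * m + 1, by omega⟩ (FreeGroup.of ⟨m + 2, by omega⟩) =
        w⁻¹ * FreeGroup.of ⟨m + 2, by omega⟩)
    (hL' : ∀ m : ℕ, ∀ _ : m < n - 2, ∀ i : Fin n, i ≠ ⟨m + 2, by omega⟩ →
      g ⟨2 * m + 1, by omega⟩ (FreeGroup.of i) = FreeGroup.of i) :
    (∀ j : Fin (2 * n - 4), ∀ φ : MulAut (FreeGroup (Fin n)),
        (QuotientGroup.mk φ : MulAut (FreeGroup (Fin n)) ⧸ (MulAut.conj :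
            FreeGroup (Fin n) →* MulAut (FreeGroup (Fin n))).range) = QuotientGroup.mk (g j) →
        ∀ x : Abelianization (FreeGroup (Fin n)), Abelianization.map φ.toMonoidHom x = x) ∧
      (∀ j k, Commute
        (QuotientGroup.mk (s := (MulAut.conj :
            FreeGroup (Fin n) →* MulAut (FreeGroup (Fin n))).range) (g j))
        (QuotientGroup.mk (g k))) ∧
      Function.Injective (fun c : Fin (2 * n - 4) → ℤ =>
        (QuotientGroup.mk ((List.ofFn fun j => g j ^ c j).prod) :
          MulAut (FreeGroup (Fin n)) ⧸ (MulAut.conj :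
            FreeGroup (Fin n) →* MulAut (FreeGroup (Fin n))).range)) := by
  -- The exponents of `g j`: `g (2m)` has `a = 1` and `g (2m+1)` has `b = 1` at index `m + 2`.
  let A : Fin (2 * n - 4) → Fin n → ℤ := fun j i =>
    if j.val % 2 = 0 ∧ i.val = j.val / 2 + 2 then 1 else 0
  let B : Fin (2 * n - 4) → Fin n → ℤ := fun j i =>
    if j.val % 2 = 1 ∧ i.val = j.val / 2 + 2 then 1 else 0
  let G : Fin (2 * n - 4) →
      MulAut (FreeGroup (Fin n)) × Multiplicative ((Fin n → ℤ) × (Fin n → ℤ)) :=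
    fun j => (g j, Multiplicative.ofAdd (A j, B j))
  have hgen : ∀ j i, g j (FreeGroup.of i) = w ^ (-(B j i)) * FreeGroup.of i * w ^ (A j i) := by
    intro j i
    have hj := j.isLt
    rcases Nat.mod_two_eq_zero_or_one j.val with hp | hp
    · have hm : j.val / 2 < n - 2 := by omega
      have ej : j = ⟨2 * (j.val / 2), by omega⟩ := Fin.ext (by simp; omega)
      by_cases hi : i.val = j.val / 2 + 2
      · have ei : i = ⟨j.val / 2 + 2, by omega⟩ := Fin.ext hi
        have := hR _ hm
        rw [← ej, ← ei] at this
        simp [A, B, hp, hi, this]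
      · have := hR' _ hm i (fun h => hi (congrArg Fin.val h))
        rw [← ej] at this
        simp [A, B, hi, this]
    · have hm : j.val / 2 < n - 2 := by omega
      have ej : j = ⟨2 * (j.val / 2) + 1, by omega⟩ := Fin.ext (by simp; omega)
      by_cases hi : i.val = j.val / 2 + 2
      · have ei : i = ⟨j.val / 2 + 2, by omega⟩ := Fin.ext hi
        have := hL _ hm
        rw [← ej, ← ei] at this
        simp [A, B, hp, hi, this]
      · have := hL' _ hm i (fun h => hi (congrArg Fin.val h))
        rw [← ej] at this
        simp [A, B, hi, this]
  have hG : ∀ j, G j ∈ typeCGraph w := by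
    intro j
    refine ⟨?_, hgen j⟩
    have hf : Set.EqOn (g j).toMonoidHom (MonoidHom.id _)
        (Subgroup.closure ({FreeGroup.of ⟨0, by omega⟩, FreeGroup.of ⟨1, by omega⟩} :
          Set (FreeGroup (Fin n)))) := by
      apply MonoidHom.eqOn_closure
      rintro _ (rfl | rfl)
      · simp [hgen, A, B]
      · simp [hgen, A, B]
    exact hf hw
  refine ⟨?_, ?_, ?_⟩
  · intro j φ hφ x
    obtain ⟨h, hh⟩ := QuotientGroup.eq.1 hφ
    obtain ⟨y, rfl⟩ := QuotientGroup.mk_surjective x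
    have hgy : g j y = φ (h * y * h⁻¹) := by
      have : g j = φ * MulAut.conj h := by rw [hh]; group
      rw [this]; simp
    have hab := typeCGraph_abelianization hwab (hG j) y
    change Abelianization.of (g j y) = _ at hab
    change Abelianization.of (φ y) = Abelianization.of y
    rw [← hab, hgy]
    simp only [map_mul, map_inv, mul_inv_cancel_comm]
  · intro j k
    exact congrArg (QuotientGroup.mk (s := (MulAut.conj :
      FreeGroup (Fin n) →* MulAut (FreeGroup (Fin n))).range)) (typeCGraph_commute (hG j) (hG k)).eq
  · let P : (Fin (2 * n - 4) → ℤ) →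
        MulAut (FreeGroup (Fin n)) × Multiplicative ((Fin n → ℤ) × (Fin n → ℤ)) :=
      fun c => (List.ofFn fun j => G j ^ c j).prod
    have hP : ∀ c, P c ∈ typeCGraph w := by
      intro c
      refine Subgroup.list_prod_mem _ fun x hx => ?_
      obtain ⟨j, rfl⟩ := (List.mem_ofFn' _ _).1 hx
      exact zpow_mem (hG j) _
    have hP1 : ∀ c, (P c).1 = (List.ofFn fun j => g j ^ c j).prod := by
      intro c
      change MonoidHom.fst _ _ (P c) = _
      simp only [P, map_list_prod, List.map_ofFn]
      rfl
    have hP2 : ∀ c, (P c).2.toAdd = ∑ j, c j • (A j, B j) := by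
      intro c
      have : (P c).2 = ∏ j, Multiplicative.ofAdd (A j, B j) ^ c j := by
        rw [← List.prod_ofFn]
        change MonoidHom.snd _ _ (P c) = _
        simp only [P, map_list_prod, List.map_ofFn]
        rfl
      rw [this, toAdd_prod]
      rfl
    have hPA : ∀ c i, (P c).2.toAdd.1 i = ∑ j, c j * A j i := by
      intro c i
      simp [hP2, Prod.fst_sum, Finset.sum_apply]
    have hPB : ∀ c i, (P c).2.toAdd.2 i = ∑ j, c j * B j i := by
      intro c i
      simp [hP2, Prod.snd_sum, Finset.sum_apply]
    have hsmall : ∀ c (i : Fin n), i.val < 2 → (P c).1 (FreeGroup.of i) = FreeGroup.of i := by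
      intro c i hi
      have h1 : ∀ j, A j i = 0 := fun j => if_neg (by omega)
      have h2 : ∀ j, B j i = 0 := fun j => if_neg (by omega)
      rw [(hP c).2 i, hPA, hPB]
      simp [h1, h2]
    intro c d hcd
    obtain ⟨h, hh⟩ := QuotientGroup.eq.1 hcd
    rw [← hP1, ← hP1] at hh
    have hconj : ∀ y, (P d).1 y = (P c).1 h * (P c).1 y * ((P c).1 h)⁻¹ := by
      intro y
      have : (P d).1 = (P c).1 * MulAut.conj h := by rw [hh]; group
      rw [this]; simp
    have hu : ∀ i : Fin n, i.val < 2 → Commute ((P c).1 h) (FreeGroup.of i) := by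
      intro i hi
      have := hconj (FreeGroup.of i)
      rw [hsmall c i hi, hsmall d i hi] at this
      exact (eq_mul_inv_iff_mul_eq.1 this).symm
    have hu1 : (P c).1 h = 1 :=
      FreeGroup.eq_one_of_commute_of (a := (⟨0, by omega⟩ : Fin n)) (b := ⟨1, by omega⟩)
        (by simp) (hu _ (by simp)) (hu _ (by simp))
    have hexp : ∀ i : Fin n, 2 ≤ i.val →
        (P c).2.toAdd.1 i = (P d).2.toAdd.1 i ∧ (P c).2.toAdd.2 i = (P d).2.toAdd.2 i := by
      intro i hi
      refine exponents_eq (i := i) hw1 (by simp) ?_ ?_ hw ?_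
      · rintro rfl; simp at hi
      · rintro rfl; simp at hi
      · rw [← (hP c).2 i, ← (hP d).2 i, hconj, hu1]; simp
    funext j
    have hj := j.isLt
    have he := hexp ⟨j.val / 2 + 2, by omega⟩ (by simp)
    rcases Nat.mod_two_eq_zero_or_one j.val with hp | hp
    · have hs : ∀ c : Fin (2 * n - 4) → ℤ,
          ∑ k, c k * A k ⟨j.val / 2 + 2, by omega⟩ = c j := by
        intro c
        rw [Finset.sum_eq_single j]
        · simp [A, hp]
        · intro k _ hk
          have : ¬ (k.val % 2 = 0 ∧ j.val / 2 + 2 = k.val / 2 + 2) :=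
            fun h => hk (Fin.ext (by omega))
          simp only [A, if_neg this, mul_zero]
        · simp
      simpa only [hPA, hs] using he.1
    · have hs : ∀ c : Fin (2 * n - 4) → ℤ,
          ∑ k, c k * B k ⟨j.val / 2 + 2, by omega⟩ = c j := by
        intro c
        rw [Finset.sum_eq_single j]
        · simp [B, hp]
        · intro k _ hk
          have : ¬ (k.val % 2 = 1 ∧ j.val / 2 + 2 = k.val / 2 + 2) :=
            fun h => hk (Fin.ext (by omega))
          simp only [B, if_neg this, mul_zero]
        · simp
      simpa only [hPB, hs] using he.2
end
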